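/- For every integer k ≥ 0: b_k − v_{k−ℓ} + b_{k−ℓ+1} − v_{k−ℓ+1} ≤ b^φ_k ≤ m_k − r_{k−ℓ} + m_{k−ℓ+1} − r_{k−ℓ+1}. -/

import Mathlib

open LinearMap Module

noncomputable section

namespace ConeMorse

variable (A : ℤ → Type) [∀ i, AddCommGroup (A i)] [∀ i, Module ℝ (A i)]

/-- Transport along an equality of indices. -/
def lcast {m k : ℤ} (h : m = k) : A m →ₗ[ℝ] A k where
  toFun x := h ▸ x
  map_add' x y := by subst h; rfl
  map_smul' c x := by subst h; rfl

variable (d : ∀ i, A i →ₗ[ℝ] A (i + 1))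

/-- Cocycles in degree `i`. -/
def cocycles (i : ℤ) : Submodule ℝ (A i) := ker (d i)

/-- Coboundaries in degree `i`: the image of `d : A^{i-1} → A^i`. -/
def cobound (i : ℤ) : Submodule ℝ (A i) :=
  range ((lcast A (show i - 1 + 1 = i by ring)).comp (d (i - 1)))

/-- Cohomology in degree `i`: cocycles modulo coboundaries. -/
abbrev Hcoh (i : ℤ) :=
  cocycles A d i ⧸ Submodule.comap (cocycles A d i).subtype (cobound A d i)

section OneComplex

variable (ℓ : ℤ) (φ : ∀ i, A i →ₗ[ℝ] A (i + ℓ))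

/-- The cone differential `∂_C (a, b) = (∂ a + φ b, (−1)^{ℓ−1} ∂ b)` on
`Cone^i(φ) = A^i ⊕ A^{i−ℓ+1}`. -/
def coneD (i : ℤ) : (A i × A (i - ℓ + 1)) →ₗ[ℝ] (A (i + 1) × A (i + 1 - ℓ + 1)) :=
  LinearMap.prod
    ((d i).comp (LinearMap.fst ℝ (A i) (A (i - ℓ + 1))) +
      (lcast A (show i - ℓ + 1 + ℓ = i + 1 by ring)).comp
        ((φ (i - ℓ + 1)).comp (LinearMap.snd ℝ (A i) (A (i - ℓ + 1)))))
    (((-1 : ℝ) ^ (ℓ - 1)) •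
      ((lcast A (show i - ℓ + 1 + 1 = i + 1 - ℓ + 1 by ring)).comp
        ((d (i - ℓ + 1)).comp (LinearMap.snd ℝ (A i) (A (i - ℓ + 1))))))

variable [∀ i, FiniteDimensional ℝ (A i)]

/-- `m_k`: the dimension of the cochain group in degree `k`. -/
def mnum (k : ℤ) : ℕ := finrank ℝ (A k)

/-- `b_k`: the dimension of the cohomology in degree `k`. -/
def bnum (k : ℤ) : ℕ := finrank ℝ (Hcoh A d k)

/-- `v_k`: the rank of `φ : A^k → A^{k+ℓ}`. -/
def vnum (k : ℤ) : ℕ := finrank ℝ (range (φ k))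

/-- `r_k`: the rank of the induced map `[φ] : H^k → H^{k+ℓ}`, computed as the dimension of
`φ(Z^k)/(φ(Z^k) ∩ B^{k+ℓ})`. -/
def rnum (k : ℤ) : ℕ :=
  finrank ℝ ((Submodule.map (φ k) (cocycles A d k)) ⧸
    Submodule.comap (Submodule.map (φ k) (cocycles A d k)).subtype (cobound A d (k + ℓ)))

/-- `b^φ_k`: the dimension of the cone cohomology in degree `k`. -/
def bphi (k : ℤ) : ℕ :=
  finrank ℝ (Hcoh (fun i => A i × A (i - ℓ + 1)) (coneD A d ℓ φ) k)

end OneComplex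

end ConeMorse

open ConeMorse

/-!
Writing `z_k` for the dimension of the cocycles, rank–nullity gives `b_k = z_k + z_{k-1} - m_{k-1}`
for any complex. A cone cocycle is a pair `(a, b)` with `∂ b = 0` and `φ b = -∂ a`, so rank–nullity
for `(a, b) ↦ ∂ a + φ b` on `C^k ⊕ Z^{k-ℓ+1}`, whose image is `B^{k+1} + φ(Z^{k-ℓ+1})`, shows that
the cone has `z_k + z_{k-ℓ+1} - r_{k-ℓ+1}` independent cocycles. Together these yield the identity
`b^φ_k = b_k + b_{k-ℓ+1} - r_{k-ℓ} - r_{k-ℓ+1}`, and the bounds follow from `r ≤ v` and `b ≤ m`.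
-/

namespace ConeMorse

section Ring

variable {R M N M' N' : Type*} [Ring R] [AddCommGroup M] [Module R M]
  [AddCommGroup N] [Module R N] [AddCommGroup M'] [Module R M'] [AddCommGroup N'] [Module R N']

theorem finrank_comap_subtype (S T : Submodule R M) :
    finrank R (T.comap S.subtype) = finrank R (S ⊓ T : Submodule R M) := by
  rw [← Submodule.map_comap_subtype]
  exact (Submodule.equivSubtypeMap S (T.comap S.subtype)).finrank_eq

theorem ker_coprod_prod_comp_snd (d : M →ₗ[R] M') (f : N →ₗ[R] M') (e : N →ₗ[R] N') :
    ker ((d.coprod f).prod (e.comp (snd R M N))) =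
      Submodule.prod ⊤ (ker e) ⊓ ker (d.coprod f) := by
  rw [ker_prod, inf_comm, ker_comp, Submodule.comap_snd]

end Ring

section DivisionRing

variable {K V W V' W' : Type*} [DivisionRing K] [AddCommGroup V] [Module K V]
  [AddCommGroup W] [Module K W] [AddCommGroup V'] [Module K V'] [AddCommGroup W'] [Module K W']

theorem finrank_quotient_comap_subtype_add_finrank (S T : Submodule K V)
    [FiniteDimensional K S] [FiniteDimensional K T] :
    finrank K (S ⧸ T.comap S.subtype) + finrank K T = finrank K (S ⊔ T : Submodule K V) := by
  have hquot := Submodule.finrank_quotient_add_finrank (T.comap S.subtype)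
  have hsup := Submodule.finrank_sup_add_finrank_inf_eq S T
  rw [finrank_comap_subtype] at hquot
  omega

theorem finrank_map_add_finrank_inf_ker (f : V →ₗ[K] W) (S : Submodule K V)
    [FiniteDimensional K S] :
    finrank K (S.map f) + finrank K (S ⊓ ker f : Submodule K V) = finrank K S := by
  rw [← range_domRestrict, ← finrank_comap_subtype, ← ker_domRestrict]
  exact finrank_range_add_finrank_ker (f.domRestrict S)

theorem finrank_submodule_prod (S : Submodule K V) (T : Submodule K W)
    [FiniteDimensional K S] [FiniteDimensional K T] :
    finrank K (S.prod T) = finrank K S + finrank K T := by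
  have hinj : Function.Injective (S.subtype.prodMap T.subtype) :=
    S.subtype_injective.prodMap T.subtype_injective
  rw [← finrank_prod, ← finrank_range_of_inj hinj, range_prodMap, S.range_subtype, T.range_subtype]

theorem finrank_ker_coprod_prod_comp_snd [FiniteDimensional K V] [FiniteDimensional K W]
    (d : V →ₗ[K] V') (f : W →ₗ[K] V') (e : W →ₗ[K] W') :
    finrank K (ker ((d.coprod f).prod (e.comp (snd K V W)))) +
        finrank K ((ker e).map f ⊔ range d : Submodule K V') =
      finrank K V + finrank K (ker e) := by
  have hrank := finrank_map_add_finrank_inf_ker (d.coprod f) (Submodule.prod ⊤ (ker e))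
  rw [map_coprod_prod, Submodule.map_top, sup_comm, finrank_submodule_prod, finrank_top] at hrank
  rw [ker_coprod_prod_comp_snd, add_comm, hrank]

end DivisionRing

variable {A : ℤ → Type} [∀ i, AddCommGroup (A i)] [∀ i, Module ℝ (A i)] {ℓ : ℤ}

theorem lcast_lcast {i j k : ℤ} (hij : i = j) (hjk : j = k) (x : A i) :
    lcast A hjk (lcast A hij x) = lcast A (hij.trans hjk) x := by
  subst hij hjk
  rfl

theorem lcast_injective {i j : ℤ} (h : i = j) : Function.Injective (lcast A h) := by
  subst h
  exact Function.injective_id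

theorem map_lcast (f : ∀ i, A i →ₗ[ℝ] A (i + ℓ)) {i j : ℤ} (h : i = j) (x : A i) :
    f j (lcast A h x) = lcast A (congrArg (· + ℓ) h) (f i x) := by
  subst h
  rfl

theorem finrank_map_lcast {i j : ℤ} (h : i = j) (S : Submodule ℝ (A i)) :
    finrank ℝ (S.map (lcast A h)) = finrank ℝ S :=
  (S.equivMapOfInjective (lcast A h) (lcast_injective h)).finrank_eq.symm

variable (d : ∀ i, A i →ₗ[ℝ] A (i + 1)) (φ : ∀ i, A i →ₗ[ℝ] A (i + ℓ))

theorem cobound_add_one (i : ℤ) : cobound A d (i + 1) = range (d i) := by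
  have cobound_eq_range {j : ℤ} (h : i + 1 = j) :
      cobound A d j = range ((lcast A h).comp (d i)) := by
    obtain rfl : i = j - 1 := by omega
    rfl
  exact cobound_eq_range rfl

theorem map_lcast_cobound {i j : ℤ} (h : i = j) :
    (cobound A d i).map (lcast A h) = cobound A d j := by
  subst h
  exact Submodule.map_id _

theorem coneD_apply (i : ℤ) (a : A i) (b : A (i - ℓ + 1)) :
    coneD A d ℓ φ i (a, b) =
      (d i a + lcast A (show i - ℓ + 1 + ℓ = i + 1 by ring) (φ _ b),
        ((-1 : ℝ) ^ (ℓ - 1)) •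
          lcast A (show i - ℓ + 1 + 1 = i + 1 - ℓ + 1 by ring) (d _ b)) :=
  rfl

variable {d φ} in
theorem coneD_comp_coneD (hd : ∀ i, (d (i + 1)).comp (d i) = 0)
    (hφ : ∀ i, (d (i + ℓ)).comp (φ i) =
      ((-1 : ℝ) ^ ℓ) • (lcast A (show i + 1 + ℓ = i + ℓ + 1 by ring)).comp
        ((φ (i + 1)).comp (d i)))
    (i : ℤ) : (coneD A d ℓ φ (i + 1)).comp (coneD A d ℓ φ i) = 0 := by
  have d_d (i : ℤ) (x : A i) : d (i + 1) (d i x) = 0 := LinearMap.congr_fun (hd i) x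
  have d_φ (i : ℤ) (x : A i) : d (i + ℓ) (φ i x) = ((-1 : ℝ) ^ ℓ) •
      lcast A (show i + 1 + ℓ = i + ℓ + 1 by ring) (φ (i + 1) (d i x)) :=
    LinearMap.congr_fun (hφ i) x
  have sign : (-1 : ℝ) ^ ℓ = -(-1 : ℝ) ^ (ℓ - 1) := by
    rw [zpow_sub_one₀ (by norm_num)]
    norm_num
  refine LinearMap.ext fun ⟨a, b⟩ => Prod.ext ?_ ?_
  · simp [coneD_apply, d_d, d_φ, map_lcast, lcast_lcast, sign]
  · simp [coneD_apply, d_d, map_lcast]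

theorem ker_coneD (i : ℤ) :
    ker (coneD A d ℓ φ i) =
      ker (((d i).coprod
          ((lcast A (show i - ℓ + 1 + ℓ = i + 1 by ring)).comp (φ (i - ℓ + 1)))).prod
        ((d (i - ℓ + 1)).comp (snd ℝ (A i) (A (i - ℓ + 1))))) := by
  ext ⟨a, b⟩
  have sign_ne_zero : (-1 : ℝ) ^ (ℓ - 1) ≠ 0 := zpow_ne_zero _ (by norm_num)
  simp [coneD_apply, sign_ne_zero, map_eq_zero_iff _ (lcast_injective _)]

variable [∀ i, FiniteDimensional ℝ (A i)]

variable {d} in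
theorem bnum_add_mnum (hd : ∀ i, (d (i + 1)).comp (d i) = 0) {i j : ℤ} (h : i + 1 = j) :
    bnum A d j + mnum A i = finrank ℝ (cocycles A d j) + finrank ℝ (cocycles A d i) := by
  subst h
  have range_le : range (d i) ≤ cocycles A d (i + 1) := range_le_ker_iff.2 (hd i)
  have hcoh : bnum A d (i + 1) + finrank ℝ (cobound A d (i + 1)) =
      finrank ℝ (cocycles A d (i + 1) ⊔ cobound A d (i + 1) : Submodule ℝ (A (i + 1))) :=
    finrank_quotient_comap_subtype_add_finrank _ _
  have hrank : finrank ℝ (range (d i)) + finrank ℝ (cocycles A d i) = mnum A i :=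
    finrank_range_add_finrank_ker (d i)
  rw [cobound_add_one, sup_eq_left.2 range_le] at hcoh
  omega

theorem rnum_add_finrank_range {i j : ℤ} (h : j + ℓ = i + 1) :
    rnum A d ℓ φ j + finrank ℝ (range (d i)) =
      finrank ℝ ((cocycles A d j).map ((lcast A h).comp (φ j)) ⊔ range (d i) :
        Submodule ℝ (A (i + 1))) := by
  rw [← cobound_add_one, ← map_lcast_cobound d h, Submodule.map_comp, ← Submodule.map_sup,
    finrank_map_lcast, finrank_map_lcast]
  exact finrank_quotient_comap_subtype_add_finrank _ _

theorem finrank_ker_coneD_add_rnum {i j : ℤ} (h : j + ℓ = i + 1) :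
    finrank ℝ (ker (coneD A d ℓ φ i)) + rnum A d ℓ φ j =
      finrank ℝ (cocycles A d i) + finrank ℝ (cocycles A d j) := by
  obtain rfl : j = i - ℓ + 1 := by omega
  have hker := finrank_ker_coprod_prod_comp_snd (d i) ((lcast A h).comp (φ (i - ℓ + 1)))
    (d (i - ℓ + 1))
  have hrnum := rnum_add_finrank_range d φ h
  have hrank := finrank_range_add_finrank_ker (d i)
  rw [← ker_coneD] at hker
  unfold cocycles at hrnum ⊢
  omega

variable {d φ} in
theorem bphi_add_rnum_add_rnum (hd : ∀ i, (d (i + 1)).comp (d i) = 0)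
    (hφ : ∀ i, (d (i + ℓ)).comp (φ i) =
      ((-1 : ℝ) ^ ℓ) • (lcast A (show i + 1 + ℓ = i + ℓ + 1 by ring)).comp
        ((φ (i + 1)).comp (d i)))
    (k : ℤ) :
    bphi A d ℓ φ k + rnum A d ℓ φ (k - ℓ) + rnum A d ℓ φ (k - ℓ + 1) =
      bnum A d k + bnum A d (k - ℓ + 1) := by
  have hcone : bphi A d ℓ φ k + finrank ℝ (A (k - 1) × A (k - 1 - ℓ + 1)) =
      finrank ℝ (ker (coneD A d ℓ φ k)) + finrank ℝ (ker (coneD A d ℓ φ (k - 1))) :=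
    bnum_add_mnum (A := fun i => A i × A (i - ℓ + 1)) (coneD_comp_coneD hd hφ)
      (sub_add_cancel k 1)
  have hdim : finrank ℝ (A (k - 1) × A (k - 1 - ℓ + 1)) = mnum A (k - 1) + mnum A (k - ℓ) := by
    rw [finrank_prod, show k - 1 - ℓ + 1 = k - ℓ by ring, mnum, mnum]
  have hker := finrank_ker_coneD_add_rnum d φ (show k - ℓ + 1 + ℓ = k + 1 by ring)
  have hker_pred := finrank_ker_coneD_add_rnum d φ (show k - ℓ + ℓ = k - 1 + 1 by ring)
  have hfst := bnum_add_mnum hd (sub_add_cancel k 1)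
  have hsnd := bnum_add_mnum hd (rfl : k - ℓ + 1 = k - ℓ + 1)
  omega

theorem rnum_le_vnum (k : ℤ) : rnum A d ℓ φ k ≤ vnum A ℓ φ k :=
  (Submodule.finrank_quotient_le _).trans (Submodule.finrank_mono map_le_range)

theorem bnum_le_mnum (k : ℤ) : bnum A d k ≤ mnum A k :=
  (Submodule.finrank_quotient_le _).trans (Submodule.finrank_le _)

end ConeMorse

theorem cone_cohomology_two_sided_bound_general
    {ℓ : ℤ} {C : ℤ → Type} [∀ i, AddCommGroup (C i)] [∀ i, Module ℝ (C i)]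
    [∀ i, FiniteDimensional ℝ (C i)]
    {d : ∀ i, C i →ₗ[ℝ] C (i + 1)}
    (hd : ∀ i, (d (i + 1)).comp (d i) = 0)
    {φ : ∀ i, C i →ₗ[ℝ] C (i + ℓ)}
    (hφ : ∀ i, (d (i + ℓ)).comp (φ i) =
      ((-1 : ℝ) ^ ℓ) • (lcast C (show i + 1 + ℓ = i + ℓ + 1 by ring)).comp
        ((φ (i + 1)).comp (d i)))
    (k : ℤ) :
    (bnum C d k : ℤ) - vnum C ℓ φ (k - ℓ) + bnum C d (k - ℓ + 1) - vnum C ℓ φ (k - ℓ + 1) ≤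
        (bphi C d ℓ φ k : ℤ) ∧
      (bphi C d ℓ φ k : ℤ) ≤
        (mnum C k : ℤ) - rnum C d ℓ φ (k - ℓ) + mnum C (k - ℓ + 1) -
          rnum C d ℓ φ (k - ℓ + 1) := by
  have cone_identity := bphi_add_rnum_add_rnum hd hφ k
  have r_le_v := rnum_le_vnum d φ
  have b_le_m := bnum_le_mnum d
  constructor
  · linarith [r_le_v (k - ℓ), r_le_v (k - ℓ + 1)]
  · linarith [b_le_m k, b_le_m (k - ℓ + 1)]

/-- STATEMENT 9: for every integer `k ≥ 0`,
`b_k − v_{k−ℓ} + b_{k−ℓ+1} − v_{k−ℓ+1} ≤ b^φ_k ≤ m_k − r_{k−ℓ} + m_{k−ℓ+1} − r_{k−ℓ+1}`. -/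
theorem cone_cohomology_two_sided_bound
    (n ℓ : ℤ) (hn : 0 ≤ n) (hℓ : 1 ≤ ℓ)
    (C : ℤ → Type) [∀ i, AddCommGroup (C i)] [∀ i, Module ℝ (C i)]
    [∀ i, FiniteDimensional ℝ (C i)]
    (hC : ∀ i, i < 0 ∨ n < i → Subsingleton (C i))
    (d : ∀ i, C i →ₗ[ℝ] C (i + 1))
    (hd : ∀ i, (d (i + 1)).comp (d i) = 0)
    (φ : ∀ i, C i →ₗ[ℝ] C (i + ℓ))
    (hφ : ∀ i, (d (i + ℓ)).comp (φ i) =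
      ((-1 : ℝ) ^ ℓ) • (lcast C (show i + 1 + ℓ = i + ℓ + 1 by ring)).comp
        ((φ (i + 1)).comp (d i))) :
    ∀ k : ℤ, 0 ≤ k →
      (bnum C d k : ℤ) - vnum C ℓ φ (k - ℓ) + bnum C d (k - ℓ + 1) - vnum C ℓ φ (k - ℓ + 1) ≤
          (bphi C d ℓ φ k : ℤ) ∧
        (bphi C d ℓ φ k : ℤ) ≤
          (mnum C k : ℤ) - rnum C d ℓ φ (k - ℓ) + mnum C (k - ℓ + 1) -
            rnum C d ℓ φ (k - ℓ + 1) :=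
  fun k _ => cone_cohomology_two_sided_bound_general hd hφ k
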